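/- Let f(u) := e^{e^u}. For 0 < t < 1 set w(t) := (1/4)·t²·(−2 log t + 1). Then there exist r₀ ∈ (0,1), C > 0, and a twice continuously differentiable function u : (0,r₀) → ℝ such that u''(t) + u'(t)/t + e^{e^{u(t)}} = 0 for all t ∈ (0,r₀), u(t) → ∞ as t → 0⁺, and for all t ∈ (0,r₀): | u(t) − log( −log w(t) − log(−log w(t)) ) | ≤ C · log(−log w(t)) / (−log w(t))². -/

import Mathlib

open Filter

/-- `w(t) = (1/4)·t²·(−2 log t + 1)`. -/
noncomputable def w18 (t : ℝ) : ℝ := (1 / 4) * t ^ 2 * (-2 * Real.log t + 1)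

/-!
With `s = -log t` and `u(t) = W(s)` the radial equation becomes `W'' = -exp (exp W - 2 s)`. The
profile `W = log (x ^ 2 - 3)`, where `s = (x ^ 2 - 3) / 2 + 2 log x - log 2` defines `x` implicitly,
solves it up to an error `O(x ^ (-8))`. The linearization around the profile oscillates with
frequency proportional to `ds/dx = x + 2 / x`, so the Liouville substitution
`W = log (x ^ 2 - 3) + √(x + 2 / x) * Z` turns the equation into a weakly perturbed oscillator
`Z'' + 4 Z = remainder x Z`, whose source is `O(x ^ (-6))` and whose Lipschitz constant in `Z` is
`O(x ^ (-2))`. Integrating Duhamel's formula from `+∞` gives a contraction, hence a solution with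
`Z = O(x ^ (-5))` and `W = log (x ^ 2 - 3) + O(x ^ (-4))`. Finally
`L = -log w = x ^ 2 - 3 + log (x ^ 2) + O(log x / x ^ 2)` and
`log L = log (x ^ 2) + O(log x / x ^ 2)`, so that `L - log L` inverts the implicit relation between
`s` and `x` up to `O(log x / x ^ 2)`, and the outer logarithm divides this error by `x ^ 2`, that
is, by a quantity comparable to `L`.
-/

section Analysis

open MeasureTheory Set Function
open scoped Topology BoundedContinuousFunction

lemma abs_log_sub_log_le {a b c : ℝ} (hc : 0 < c) (ha : c ≤ a) (hb : c ≤ b) :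
    |Real.log a - Real.log b| ≤ |a - b| / c := by
  wlog hab : b ≤ a generalizing a b
  · simpa only [abs_sub_comm] using this hb ha (le_of_not_ge hab)
  have hb0 : 0 < b := hc.trans_le hb
  have ha0 : 0 < a := hc.trans_le ha
  rw [abs_of_nonneg (sub_nonneg.2 (Real.log_le_log hb0 hab)), abs_of_nonneg (sub_nonneg.2 hab),
    ← Real.log_div ha0.ne' hb0.ne']
  calc Real.log (a / b) ≤ a / b - 1 := Real.log_le_sub_one_of_pos (by positivity)
    _ = (a - b) / b := by field_simp
    _ ≤ (a - b) / c := div_le_div_of_nonneg_left (sub_nonneg.2 hab) hc hb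

lemma contDiffOn_two_of_hasDerivAt {s : Set ℝ} (hs : IsOpen s) {u u₁ u₂ : ℝ → ℝ}
    (hu : ∀ t ∈ s, HasDerivAt u (u₁ t) t) (hu₁ : ∀ t ∈ s, HasDerivAt u₁ (u₂ t) t)
    (hu₂ : ContinuousOn u₂ s) : ContDiffOn ℝ 2 u s := by
  have hu₁_C1 : ContDiffOn ℝ (0 + 1) u₁ s := by
    refine (contDiffOn_succ_iff_deriv_of_isOpen hs).2
      ⟨fun t ht => (hu₁ t ht).differentiableAt.differentiableWithinAt, by simp, ?_⟩
    exact contDiffOn_zero.2 (hu₂.congr fun t ht => (hu₁ t ht).deriv)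
  rw [← one_add_one_eq_two, contDiffOn_succ_iff_deriv_of_isOpen hs]
  refine ⟨fun t ht => (hu t ht).differentiableAt.differentiableWithinAt, by simp, ?_⟩
  rw [zero_add] at hu₁_C1
  exact hu₁_C1.congr fun t ht => (hu t ht).deriv

lemma exists_hasDerivAt_rightInverse {H h : ℝ → ℝ} {c : ℝ} (hc : 0 < c)
    (hH : ∀ y, HasDerivAt H (h y) y) (hh : ∀ y, c ≤ h y) :
    ∃ η : ℝ → ℝ, Tendsto η atTop atTop ∧ ∀ s, H (η s) = s ∧ HasDerivAt η (h (η s))⁻¹ s := by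
  have hpos : ∀ y, 0 < h y := fun y => hc.trans_le (hh y)
  have hcont : Continuous H := continuous_iff_continuousAt.2 fun y => (hH y).continuousAt
  have hmono : StrictMono H := strictMono_of_deriv_pos fun y => by
    rw [(hH y).deriv]; exact hpos y
  have hlin : Monotone fun y => H y - c * y := by
    have hd : ∀ y, HasDerivAt (fun y => H y - c * y) (h y - c) y := fun y => by
      simpa using (hH y).fun_sub ((hasDerivAt_id' y).const_mul c)
    refine monotone_of_deriv_nonneg (fun y => (hd y).differentiableAt) fun y => ?_
    rw [(hd y).deriv]
    exact sub_nonneg.2 (hh y)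
  have htop : Tendsto H atTop atTop := by
    refine tendsto_atTop_mono' _ ?_
      (tendsto_atTop_add_const_right _ (H 0) (tendsto_id.const_mul_atTop hc))
    filter_upwards [eventually_ge_atTop 0] with y hy
    have := hlin hy
    simp only [id, mul_zero, sub_zero] at this ⊢
    linarith
  have hbot : Tendsto H atBot atBot := by
    refine tendsto_atBot_mono' _ ?_
      (tendsto_atBot_add_const_right _ (H 0) (tendsto_id.const_mul_atBot hc))
    filter_upwards [eventually_le_atBot 0] with y hy
    have := hlin hy
    simp only [id, mul_zero, sub_zero] at this ⊢
    linarith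
  let e := hmono.orderIsoOfSurjective H (hcont.surjective htop hbot)
  have he : ∀ s, H (e.symm s) = s := e.apply_symm_apply
  exact ⟨e.symm, e.symm.tendsto_atTop, fun s => ⟨he s, HasDerivAt.of_local_left_inverse
    e.symm.continuous.continuousAt (hH _) (hpos _).ne' (Eventually.of_forall he)⟩⟩

lemma hasDerivAt_comp_of_inv {F ξ : ℝ → ℝ} {F' p s : ℝ} (hp : p ≠ 0)
    (hF : HasDerivAt F (F' * p) (ξ s)) (hξ : HasDerivAt ξ p⁻¹ s) :
    HasDerivAt (fun s => F (ξ s)) F' s :=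
  (hF.comp s hξ).congr_deriv (mul_inv_cancel_right₀ hp F')

lemma div_pow_eq_mul_rpow {σ : ℝ} (c : ℝ) (n : ℕ) (hσ : 0 < σ) :
    c / σ ^ (n + 2) = c * σ ^ (-((n + 2 : ℕ) : ℝ)) := by
  rw [Real.rpow_neg hσ.le, Real.rpow_natCast, div_eq_mul_inv]

lemma integrableOn_Ioi_div_pow (c : ℝ) (n : ℕ) {x : ℝ} (hx : 0 < x) :
    IntegrableOn (fun σ : ℝ => c / σ ^ (n + 2)) (Ioi x) :=
  IntegrableOn.congr_fun
    ((integrableOn_Ioi_rpow_of_lt (a := -(n + 2 : ℕ)) (by push_cast; linarith) hx).const_mul c)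
    (fun _ hσ => (div_pow_eq_mul_rpow c n (hx.trans hσ)).symm) measurableSet_Ioi

lemma integral_Ioi_div_pow (c : ℝ) (n : ℕ) {x : ℝ} (hx : 0 < x) :
    ∫ σ in Ioi x, c / σ ^ (n + 2) = c / ((n + 1) * x ^ (n + 1)) := by
  have hexp : -((n + 2 : ℕ) : ℝ) + 1 = -((n + 1 : ℕ) : ℝ) := by push_cast; ring
  rw [setIntegral_congr_fun measurableSet_Ioi
      fun σ hσ => div_pow_eq_mul_rpow c n (hx.trans hσ), integral_const_mul,
    integral_Ioi_rpow_of_lt (by push_cast; linarith) hx, hexp, Real.rpow_neg hx.le,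
    Real.rpow_natCast]
  push_cast
  field_simp

lemma integrableOn_Ioi_of_continuous {E : Type*} [NormedAddCommGroup E] {F : ℝ → E} {a : ℝ}
    (hF : Continuous F) (hi : IntegrableOn F (Ioi a)) (x : ℝ) : IntegrableOn F (Ioi x) := by
  refine (hF.integrableOn_Icc.union hi).mono_set (s := Ioi x) (t := Icc x a ∪ Ioi a) fun y hy => ?_
  exact (le_or_gt y a).imp (fun h => ⟨hy.le, h⟩) id

lemma hasDerivAt_integral_Ioi {E : Type*} [NormedAddCommGroup E] [NormedSpace ℝ E]
    [CompleteSpace E] {F : ℝ → E} {a : ℝ} (hF : Continuous F) (hi : IntegrableOn F (Ioi a))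
    (x : ℝ) : HasDerivAt (fun y => ∫ σ in Ioi y, F σ) (-F x) x := by
  have hsplit : ∀ y, ∫ σ in Ioi y, F σ = (∫ σ in Ioi a, F σ) - ∫ σ in a..y, F σ := fun y => by
    rw [← intervalIntegral.integral_Ioi_sub_Ioi' hi (integrableOn_Ioi_of_continuous hF hi y),
      sub_sub_cancel]
  rw [funext hsplit]
  exact (hF.integral_hasStrictDerivAt a x).hasDerivAt.const_sub _

theorem exists_continuous_fixedPoint_of_abs_le {X : Type*} [TopologicalSpace X] {ρ : X → ℝ}
    {B K : ℝ} (hρ : ∀ x, 0 ≤ ρ x) (hρB : ∀ x, ρ x ≤ B) (hK : K < 1)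
    (S : (X → ℝ) → X → ℝ)
    (hS : ∀ f, Continuous f → (∀ x, |f x| ≤ ρ x) → Continuous (S f) ∧ ∀ x, |S f x| ≤ ρ x)
    (hSK : ∀ f h, Continuous f → (∀ x, |f x| ≤ ρ x) → Continuous h → (∀ x, |h x| ≤ ρ x) →
      ∀ d, (∀ x, |f x - h x| ≤ d) → ∀ x, |S f x - S h x| ≤ K * d) :
    ∃ f, Continuous f ∧ (∀ x, |f x| ≤ ρ x) ∧ S f = f := by
  let A : Set (X →ᵇ ℝ) := {f | ∀ x, |f x| ≤ ρ x}
  have hA : IsClosed A := by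
    simp only [A, ofPred_forall]
    exact isClosed_iInter fun x =>
      isClosed_le (continuous_eval_const x).abs continuous_const
  have : CompleteSpace A := hA.completeSpace_coe
  have : Nonempty A := ⟨⟨0, fun x => by simpa using hρ x⟩⟩
  let T : A → A := fun f => ⟨.ofNormedAddCommGroup (S f) (hS f f.1.continuous f.2).1 B
    fun x => ((hS f f.1.continuous f.2).2 x).trans (hρB x), (hS f f.1.continuous f.2).2⟩
  have hT : ContractingWith K.toNNReal T := by
    refine ⟨Real.toNNReal_lt_one.2 hK, LipschitzWith.of_dist_le_mul fun f h => ?_⟩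
    refine (BoundedContinuousFunction.dist_le (by positivity)).2 fun x => ?_
    refine (hSK f h f.1.continuous f.2 h.1.continuous h.2 (dist f h)
      (fun y => f.1.dist_coe_le_dist (g := h.1) y) x).trans ?_
    exact mul_le_mul_of_nonneg_right (Real.le_coe_toNNReal K) dist_nonneg
  obtain ⟨f, hf⟩ : ∃ f, T f = f := ⟨_, hT.fixedPoint_isFixedPt⟩
  exact ⟨f, f.1.continuous, f.2, congrArg (fun h : A => (h : X → ℝ)) hf⟩

/-- `∫ e^{iω(σ - x)} F(σ) dσ` over `σ > x`. Its imaginary part divided by `ω` is the solution of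
`Z'' + ω² Z = F` that decays at `+∞`, and minus its real part is the derivative of that solution. -/
noncomputable def oscillatoryTail (ω : ℝ) (F : ℝ → ℝ) (x : ℝ) : ℂ :=
  ∫ σ in Ioi x, Complex.exp ((ω * (σ - x) : ℝ) * Complex.I) * F σ

section OscillatoryTail

variable {F G : ℝ → ℝ} {a x : ℝ}

lemma integrableOn_exp_mul (ω y : ℝ) {s : Set ℝ} (hF : IntegrableOn F s) :
    IntegrableOn (fun σ : ℝ => Complex.exp ((ω * (σ - y) : ℝ) * Complex.I) * F σ) s :=
  hF.ofReal.bdd_mul (c := 1) (Continuous.aestronglyMeasurable (by fun_prop))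
    (Eventually.of_forall fun _ => (Complex.norm_exp_ofReal_mul_I _).le)

lemma hasDerivAt_oscillatoryTail (ω : ℝ) (hF : Continuous F) (hi : IntegrableOn F (Ioi a))
    (x : ℝ) :
    HasDerivAt (oscillatoryTail ω F) (-(ω * Complex.I) * oscillatoryTail ω F x - F x) x := by
  have hfactor : ∀ y, oscillatoryTail ω F y = Complex.exp (-(ω * Complex.I) * y) *
      ∫ σ in Ioi y, Complex.exp ((ω * (σ - 0) : ℝ) * Complex.I) * F σ := fun y => by
    rw [oscillatoryTail, ← integral_const_mul]
    congr 1 with σ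
    rw [← mul_assoc, ← Complex.exp_add]
    congr 2
    push_cast
    ring
  have hexp : HasDerivAt (fun y : ℝ => Complex.exp (-(ω * Complex.I) * y))
      (Complex.exp (-(ω * Complex.I) * x) * -(ω * Complex.I)) x := by
    simpa using ((Complex.ofRealCLM.hasDerivAt (x := x)).const_mul (-(ω * Complex.I))).cexp
  have htail := hasDerivAt_integral_Ioi (by fun_prop) (integrableOn_exp_mul ω 0 hi) x
  rw [funext hfactor]
  refine (hexp.mul htail).congr_deriv ?_
  have hone :
      Complex.exp (-(ω * Complex.I) * x) * Complex.exp ((ω * (x - 0) : ℝ) * Complex.I) = 1 := by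
    rw [← Complex.exp_add, ← Complex.exp_zero]
    congr 1
    push_cast
    ring
  linear_combination (-(F x : ℂ)) * hone

lemma hasDerivAt_oscillatoryTail_im {ω : ℝ} (hω : ω ≠ 0) (hF : Continuous F)
    (hi : IntegrableOn F (Ioi a)) (x : ℝ) :
    HasDerivAt (fun y => ω⁻¹ * (oscillatoryTail ω F y).im) (-(oscillatoryTail ω F x).re) x := by
  refine ((Complex.imCLM.hasFDerivAt.comp_hasDerivAt x
    (hasDerivAt_oscillatoryTail ω hF hi x)).const_mul ω⁻¹).congr_deriv ?_
  simp [hω]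

lemma hasDerivAt_neg_oscillatoryTail_re (ω : ℝ) (hF : Continuous F)
    (hi : IntegrableOn F (Ioi a)) (x : ℝ) :
    HasDerivAt (fun y => -(oscillatoryTail ω F y).re)
      (F x - ω * (oscillatoryTail ω F x).im) x := by
  refine (Complex.reCLM.hasFDerivAt.comp_hasDerivAt x
    (hasDerivAt_oscillatoryTail ω hF hi x)).neg.congr_deriv ?_
  simp

lemma abs_oscillatoryTail_im_le {ω : ℝ} (hω : 0 < ω) {B : ℝ → ℝ} (hB : IntegrableOn B (Ioi x))
    (hFB : ∀ σ ∈ Ioi x, |F σ| ≤ B σ) :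
    |ω⁻¹ * (oscillatoryTail ω F x).im| ≤ ω⁻¹ * ∫ σ in Ioi x, B σ := by
  rw [abs_mul, abs_of_pos (inv_pos.2 hω)]
  gcongr
  refine (Complex.abs_im_le_norm _).trans (norm_integral_le_of_norm_le hB
    ((ae_restrict_iff' measurableSet_Ioi).2 (Eventually.of_forall fun σ hσ => ?_)))
  rw [norm_mul, Complex.norm_exp_ofReal_mul_I, one_mul, Complex.norm_real]
  exact hFB σ hσ

lemma oscillatoryTail_sub (ω : ℝ) (hF : IntegrableOn F (Ioi x)) (hG : IntegrableOn G (Ioi x)) :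
    oscillatoryTail ω (fun σ => F σ - G σ) x = oscillatoryTail ω F x - oscillatoryTail ω G x := by
  simp only [oscillatoryTail, Complex.ofReal_sub (F _), mul_sub (Complex.exp _)]
  exact integral_sub (integrableOn_exp_mul ω x hF) (integrableOn_exp_mul ω x hG)

end OscillatoryTail

/-- The forcing `σ ↦ g(σ, f σ)` of an equation posed on `[a, ∞)`, with the first argument
of `g` clamped to `[a, ∞)` so that the result is continuous on the whole line. -/
def clampedForcing (a : ℝ) (g : ℝ → ℝ → ℝ) (f : ℝ → ℝ) (σ : ℝ) : ℝ := g (max σ a) (f σ)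

section ForcedOscillator

variable {ω a : ℝ} {g : ℝ → ℝ → ℝ} {f h b k ρ : ℝ → ℝ}

lemma continuous_clampedForcing (hg : ContinuousOn (uncurry g) (Ici a ×ˢ univ))
    (hf : Continuous f) : Continuous (clampedForcing a g f) :=
  hg.comp_continuous (f := fun σ => (max σ a, f σ)) (by fun_prop)
    fun σ => ⟨le_max_right σ a, mem_univ _⟩

lemma clampedForcing_of_le {σ : ℝ} (hσ : a ≤ σ) : clampedForcing a g f σ = g σ (f σ) := by
  rw [clampedForcing, max_eq_left hσ]

lemma abs_clampedForcing_le (hgb : ∀ σ, a ≤ σ → ∀ z, |z| ≤ ρ σ → |g σ z| ≤ b σ)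
    (hf : ∀ x, |f x| ≤ ρ (max x a)) {σ : ℝ} (hσ : a ≤ σ) : |clampedForcing a g f σ| ≤ b σ := by
  rw [clampedForcing_of_le hσ]
  exact hgb σ hσ _ (by simpa only [max_eq_left hσ] using hf σ)

lemma abs_clampedForcing_sub_le
    (hgk : ∀ σ, a ≤ σ → ∀ y z, |y| ≤ ρ σ → |z| ≤ ρ σ → |g σ y - g σ z| ≤ k σ * |y - z|)
    (hf : ∀ x, |f x| ≤ ρ (max x a)) (hh : ∀ x, |h x| ≤ ρ (max x a)) {σ : ℝ} (hσ : a ≤ σ) :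
    |clampedForcing a g f σ - clampedForcing a g h σ| ≤ k σ * |f σ - h σ| := by
  rw [clampedForcing_of_le hσ, clampedForcing_of_le hσ]
  exact hgk σ hσ _ _ (by simpa only [max_eq_left hσ] using hf σ)
    (by simpa only [max_eq_left hσ] using hh σ)

lemma integrableOn_clampedForcing (hg : ContinuousOn (uncurry g) (Ici a ×ˢ univ))
    (hb : IntegrableOn b (Ioi a)) (hgb : ∀ σ, a ≤ σ → ∀ z, |z| ≤ ρ σ → |g σ z| ≤ b σ)
    (hf : Continuous f) (hfρ : ∀ x, |f x| ≤ ρ (max x a)) :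
    IntegrableOn (clampedForcing a g f) (Ioi a) :=
  hb.mono' (continuous_clampedForcing hg hf).aestronglyMeasurable
    ((ae_restrict_iff' measurableSet_Ioi).2 (Eventually.of_forall fun _ hσ =>
      abs_clampedForcing_le hgb hfρ (mem_Ioi.1 hσ).le))

lemma exists_fixedPoint_variationOfConstants (hω : 0 < ω)
    (hg : ContinuousOn (uncurry g) (Ici a ×ˢ univ))
    (hρ₀ : ∀ x, a ≤ x → 0 ≤ ρ x) (hρ : AntitoneOn ρ (Ici a)) (hb : IntegrableOn b (Ioi a))
    (hgb : ∀ σ, a ≤ σ → ∀ z, |z| ≤ ρ σ → |g σ z| ≤ b σ)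
    (hbρ : ∀ x, a ≤ x → ω⁻¹ * ∫ σ in Ioi x, b σ ≤ ρ x)
    (hk : IntegrableOn k (Ioi a)) (hk₀ : ∀ σ, a ≤ σ → 0 ≤ k σ)
    (hgk : ∀ σ, a ≤ σ → ∀ y z, |y| ≤ ρ σ → |z| ≤ ρ σ → |g σ y - g σ z| ≤ k σ * |y - z|)
    (hk₁ : ω⁻¹ * ∫ σ in Ioi a, k σ < 1) :
    ∃ Z : ℝ → ℝ, Continuous Z ∧ (∀ x, |Z x| ≤ ρ (max x a)) ∧
      (fun x => ω⁻¹ * (oscillatoryTail ω (clampedForcing a g Z) (max x a)).im) = Z := by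
  have ha : ∀ x : ℝ, a ≤ max x a := fun x => le_max_right x a
  have hIoi : ∀ {x σ : ℝ}, σ ∈ Ioi (max x a) → a ≤ σ := fun hσ => (ha _).trans (mem_Ioi.1 hσ).le
  have hsub : ∀ x, Ioi (max x a) ⊆ Ioi a := fun x => Ioi_subset_Ioi (ha x)
  have hforce_int : ∀ {f}, Continuous f → (∀ x, |f x| ≤ ρ (max x a)) →
      IntegrableOn (clampedForcing a g f) (Ioi a) := integrableOn_clampedForcing hg hb hgb
  refine exists_continuous_fixedPoint_of_abs_le (B := ρ a)
    (K := ω⁻¹ * ∫ σ in Ioi a, k σ) (fun x => hρ₀ _ (ha x))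
    (fun x => hρ self_mem_Ici (ha x) (ha x)) hk₁ _ (fun f hf hfρ => ⟨?_, fun x => ?_⟩)
    fun f h hf hfρ hh hhρ d hd x => ?_
  · have hcont : Continuous fun x => ω⁻¹ * (oscillatoryTail ω (clampedForcing a g f) x).im :=
      continuous_iff_continuousAt.2 fun x => (hasDerivAt_oscillatoryTail_im hω.ne'
        (continuous_clampedForcing hg hf) (hforce_int hf hfρ) x).continuousAt
    exact hcont.comp (by fun_prop : Continuous fun x => max x a)
  · exact (abs_oscillatoryTail_im_le hω (hb.mono_set (hsub x))
      fun σ hσ => abs_clampedForcing_le hgb hfρ (hIoi hσ)).trans (hbρ _ (ha x))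
  · have hd₀ : 0 ≤ d := (abs_nonneg _).trans (hd x)
    rw [← mul_sub, ← Complex.sub_im, ← oscillatoryTail_sub ω ((hforce_int hf hfρ).mono_set (hsub x))
      ((hforce_int hh hhρ).mono_set (hsub x))]
    refine (abs_oscillatoryTail_im_le hω ((hk.mono_set (hsub x)).mul_const d) fun σ hσ =>
      (abs_clampedForcing_sub_le hgk hfρ hhρ (hIoi hσ)).trans
        (mul_le_mul_of_nonneg_left (hd σ) (hk₀ σ (hIoi hσ)))).trans ?_
    rw [integral_mul_const, ← mul_assoc]
    gcongr
    · exact (ae_restrict_iff' measurableSet_Ioi).2 (Eventually.of_forall fun σ hσ =>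
        hk₀ σ (mem_Ioi.1 hσ).le)
    · exact ha x

theorem exists_solution_oscillator (hω : 0 < ω)
    (hg : ContinuousOn (uncurry g) (Ici a ×ˢ univ))
    (hρ₀ : ∀ x, a ≤ x → 0 ≤ ρ x) (hρ : AntitoneOn ρ (Ici a)) (hb : IntegrableOn b (Ioi a))
    (hgb : ∀ σ, a ≤ σ → ∀ z, |z| ≤ ρ σ → |g σ z| ≤ b σ)
    (hbρ : ∀ x, a ≤ x → ω⁻¹ * ∫ σ in Ioi x, b σ ≤ ρ x)
    (hk : IntegrableOn k (Ioi a)) (hk₀ : ∀ σ, a ≤ σ → 0 ≤ k σ)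
    (hgk : ∀ σ, a ≤ σ → ∀ y z, |y| ≤ ρ σ → |z| ≤ ρ σ → |g σ y - g σ z| ≤ k σ * |y - z|)
    (hk₁ : ω⁻¹ * ∫ σ in Ioi a, k σ < 1) :
    ∃ Z Z' : ℝ → ℝ, ∀ x, a < x →
      HasDerivAt Z (Z' x) x ∧ HasDerivAt Z' (g x (Z x) - ω ^ 2 * Z x) x ∧ |Z x| ≤ ρ x := by
  obtain ⟨Z, hZ_cont, hZρ, hZ⟩ :=
    exists_fixedPoint_variationOfConstants hω hg hρ₀ hρ hb hgb hbρ hk hk₀ hgk hk₁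
  have hF_cont : Continuous (clampedForcing a g Z) := continuous_clampedForcing hg hZ_cont
  have hF_int : IntegrableOn (clampedForcing a g Z) (Ioi a) :=
    integrableOn_clampedForcing hg hb hgb hZ_cont hZρ
  have hZ_eq : ∀ x, a ≤ x → Z x = ω⁻¹ * (oscillatoryTail ω (clampedForcing a g Z) x).im :=
    fun x hx => by simpa only [max_eq_left hx] using (congrFun hZ x).symm
  refine ⟨Z, fun x => -(oscillatoryTail ω (clampedForcing a g Z) x).re, fun x hx => ⟨?_, ?_, ?_⟩⟩
  · refine (hasDerivAt_oscillatoryTail_im hω.ne' hF_cont hF_int x).congr_of_eventuallyEq ?_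
    filter_upwards [Ioi_mem_nhds hx] with y hy using hZ_eq y (mem_Ioi.1 hy).le
  · refine (hasDerivAt_neg_oscillatoryTail_re ω hF_cont hF_int x).congr_deriv ?_
    rw [clampedForcing_of_le hx.le, hZ_eq x hx.le]
    field_simp
  · simpa only [max_eq_left hx.le] using hZρ x

end ForcedOscillator

section LiouvilleTransform

variable {p p₁ Z Z' : ℝ → ℝ} {x p₂ z₂ : ℝ}

/-- Half of the Schwarzian derivative of a function with successive derivatives `p`, `p₁`, `p₂`:
the potential that the Liouville substitution `v = √p * Z`, `ds = p dx`, creates in the equation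
for `Z`. -/
noncomputable def halfSchwarzian (p p₁ p₂ : ℝ) : ℝ := p₂ / (2 * p) - 3 * p₁ ^ 2 / (4 * p ^ 2)

/-- The derivative of `√p * Z` with respect to a variable `s` with `ds = p dx`, when `p₁` and `Z'`
are the derivatives of `p` and `Z` with respect to `x`. -/
noncomputable def liouvilleSlope (p p₁ Z Z' : ℝ → ℝ) (x : ℝ) : ℝ :=
  p₁ x / (2 * √(p x) ^ 3) * Z x + Z' x / √(p x)

lemma hasDerivAt_sqrt_mul (hpx : 0 < p x) (hp : HasDerivAt p (p₁ x) x)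
    (hZ : HasDerivAt Z (Z' x) x) :
    HasDerivAt (fun y => √(p y) * Z y) (liouvilleSlope p p₁ Z Z' x * p x) x := by
  have hr : 0 < √(p x) := Real.sqrt_pos.2 hpx
  have hsq : √(p x) ^ 2 = p x := Real.sq_sqrt hpx.le
  refine ((hp.sqrt hpx.ne').mul hZ).congr_deriv ?_
  rw [liouvilleSlope]
  generalize √(p x) = r at hr hsq
  rw [← hsq]
  field_simp

lemma hasDerivAt_liouvilleSlope (hpx : 0 < p x) (hp : HasDerivAt p (p₁ x) x)
    (hp₁ : HasDerivAt p₁ p₂ x) (hZ : HasDerivAt Z (Z' x) x) (hZ' : HasDerivAt Z' z₂ x) :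
    HasDerivAt (liouvilleSlope p p₁ Z Z')
      ((z₂ + halfSchwarzian (p x) (p₁ x) p₂ * Z x) / √(p x) ^ 3 * p x) x := by
  have hr : 0 < √(p x) := Real.sqrt_pos.2 hpx
  have hsq : √(p x) ^ 2 = p x := Real.sq_sqrt hpx.le
  have hsqrt := hp.sqrt hpx.ne'
  refine (((hp₁.fun_div ((hsqrt.fun_pow 3).const_mul 2) (by positivity)).fun_mul hZ).fun_add
    (hZ'.fun_div hsqrt hr.ne')).congr_deriv ?_
  rw [halfSchwarzian]
  generalize √(p x) = r at hr hsq
  rw [← hsq]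
  push_cast
  field_simp
  ring

end LiouvilleTransform

section RadialEquation

variable {f W W₁ : ℝ → ℝ} {s₀ t : ℝ}

lemma hasDerivAt_comp_neg_log (ht : 0 < t) (hW : HasDerivAt W (W₁ (-Real.log t)) (-Real.log t)) :
    HasDerivAt (fun t => W (-Real.log t)) (-W₁ (-Real.log t) / t) t :=
  (hW.comp t (Real.hasDerivAt_log ht.ne').fun_neg).congr_deriv (by ring)

lemma hasDerivAt_slope_comp_neg_log (ht : 0 < t)
    (hW₁ : HasDerivAt W₁ (-Real.exp (-2 * -Real.log t) * f (W (-Real.log t))) (-Real.log t)) :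
    HasDerivAt (fun t => -W₁ (-Real.log t) / t)
      (-(-W₁ (-Real.log t) / t / t) - f (W (-Real.log t))) t := by
  have hexp : Real.exp (-2 * -Real.log t) = t ^ 2 := by
    rw [← Real.exp_log (pow_pos ht 2), Real.log_pow]
    congr 1
    push_cast
    ring
  rw [hexp] at hW₁
  refine ((hW₁.comp t (Real.hasDerivAt_log ht.ne').fun_neg).fun_neg.fun_div (hasDerivAt_id' t)
    ht.ne').congr_deriv ?_
  simp only [comp_apply]
  field_simp
  ring

lemma lt_neg_log_of_mem_Ioo (ht : t ∈ Ioo 0 (Real.exp (-s₀))) : s₀ < -Real.log t :=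
  lt_neg_of_lt_neg ((Real.log_lt_iff_lt_exp ht.1).2 ht.2)

theorem radial_solution_of_emdenFowler (hf : Continuous f)
    (hW : ∀ s, s₀ < s → HasDerivAt W (W₁ s) s)
    (hW₁ : ∀ s, s₀ < s → HasDerivAt W₁ (-Real.exp (-2 * s) * f (W s)) s) :
    ContDiffOn ℝ 2 (fun t => W (-Real.log t)) (Ioo 0 (Real.exp (-s₀))) ∧
      ∀ t ∈ Ioo 0 (Real.exp (-s₀)), deriv (deriv fun t => W (-Real.log t)) t +
        deriv (fun t => W (-Real.log t)) t / t + f (W (-Real.log t)) = 0 := by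
  have hu : ∀ t ∈ Ioo 0 (Real.exp (-s₀)),
      HasDerivAt (fun t => W (-Real.log t)) (-W₁ (-Real.log t) / t) t := fun t ht =>
    hasDerivAt_comp_neg_log ht.1 (hW _ (lt_neg_log_of_mem_Ioo ht))
  have hu₁ : ∀ t ∈ Ioo 0 (Real.exp (-s₀)), HasDerivAt (fun t => -W₁ (-Real.log t) / t)
      (-(-W₁ (-Real.log t) / t / t) - f (W (-Real.log t))) t := fun t ht =>
    hasDerivAt_slope_comp_neg_log ht.1 (hW₁ _ (lt_neg_log_of_mem_Ioo ht))
  refine ⟨contDiffOn_two_of_hasDerivAt isOpen_Ioo hu hu₁ ?_, fun t ht => ?_⟩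
  · exact ((HasDerivAt.continuousOn hu₁).div continuousOn_id fun t ht => ht.1.ne').neg.sub
      (hf.comp_continuousOn (HasDerivAt.continuousOn hu))
  · have hderiv : deriv (fun t => W (-Real.log t)) =ᶠ[𝓝 t] fun t => -W₁ (-Real.log t) / t := by
      filter_upwards [isOpen_Ioo.mem_nhds ht] with y hy using (hu y hy).deriv
    rw [hderiv.deriv_eq, (hu₁ t ht).deriv, (hu t ht).deriv]
    ring

end RadialEquation

section Profile

variable {x : ℝ}

/-- The variable `s = -log t` as a function of the Liouville variable `x`. The profile
`W = log (x ^ 2 - 3)` has `exp (exp W - 2 * s) = 4 / x ^ 4`, and the constant `3` is the one for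
which this agrees with `-W''` up to `O(x ^ (-8))`. -/
noncomputable def phase (x : ℝ) : ℝ := (x ^ 2 - 3) / 2 + 2 * Real.log x - Real.log 2

/-- The derivative of `phase`. -/
noncomputable def phaseSpeed (x : ℝ) : ℝ := x + 2 / x

/-- The derivative of `phaseSpeed`. -/
noncomputable def phaseSpeed' (x : ℝ) : ℝ := 1 - 2 / x ^ 2

/-- The amplitude of the oscillations of the linearized equation around the profile. -/
noncomputable def amplitude (x : ℝ) : ℝ := √(phaseSpeed x)

/-- The potential of the Liouville substitution with phase `phase`. -/
noncomputable def phasePotential (x : ℝ) : ℝ :=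
  halfSchwarzian (phaseSpeed x) (phaseSpeed' x) (4 / x ^ 3)

/-- The first derivative of the profile `log (x ^ 2 - 3)` with respect to `s = phase x`. -/
noncomputable def profileSlope (x : ℝ) : ℝ := 2 * x ^ 2 / ((x ^ 2 + 2) * (x ^ 2 - 3))

/-- The second derivative of the profile `log (x ^ 2 - 3)` with respect to `s = phase x`. -/
noncomputable def profileAccel (x : ℝ) : ℝ :=
  -(4 * x ^ 2 * (x ^ 4 + 6)) / ((x ^ 2 + 2) ^ 3 * (x ^ 2 - 3) ^ 2)

lemma phaseSpeed_pos (hx : 0 < x) : 0 < phaseSpeed x := by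
  unfold phaseSpeed; positivity

lemma amplitude_pos (hx : 0 < x) : 0 < amplitude x := Real.sqrt_pos.2 (phaseSpeed_pos hx)

lemma amplitude_sq (hx : 0 < x) : amplitude x ^ 2 = phaseSpeed x :=
  Real.sq_sqrt (phaseSpeed_pos hx).le

lemma hasDerivAt_phaseSpeed (hx : x ≠ 0) : HasDerivAt phaseSpeed (phaseSpeed' x) x := by
  refine ((hasDerivAt_id' x).fun_add ((hasDerivAt_inv hx).const_mul 2)).congr_deriv ?_
  rw [phaseSpeed']
  field_simp
  ring

lemma hasDerivAt_phaseSpeed' (hx : x ≠ 0) : HasDerivAt phaseSpeed' (4 / x ^ 3) x := by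
  refine ((((hasDerivAt_pow 2 x).fun_inv (pow_ne_zero 2 hx)).const_mul 2).const_sub
    1).congr_deriv ?_
  push_cast
  field_simp
  ring

lemma hasDerivAt_log_sq_sub_three (hx : 0 < x) (hx₃ : 0 < x ^ 2 - 3) :
    HasDerivAt (fun y : ℝ => Real.log (y ^ 2 - 3)) (profileSlope x * phaseSpeed x) x := by
  refine (((hasDerivAt_pow 2 x).sub_const 3).log hx₃.ne').congr_deriv ?_
  rw [profileSlope, phaseSpeed]
  push_cast
  field_simp

lemma hasDerivAt_profileSlope (hx : 0 < x) (hx₃ : 0 < x ^ 2 - 3) :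
    HasDerivAt profileSlope (profileAccel x * phaseSpeed x) x := by
  have hsq := hasDerivAt_pow 2 x
  refine ((hsq.const_mul 2).fun_div ((hsq.add_const 2).fun_mul (hsq.sub_const 3))
    (by positivity)).congr_deriv ?_
  rw [profileAccel, phaseSpeed]
  field_simp
  ring

lemma exp_neg_two_mul_phase (hx : 0 < x) :
    Real.exp (-2 * phase x) = 4 / x ^ 4 * Real.exp (-(x ^ 2 - 3)) := by
  have hexpand : -2 * phase x = Real.log 4 - Real.log (x ^ 4) + -(x ^ 2 - 3) := by
    rw [show (4 : ℝ) = 2 ^ 2 by norm_num, Real.log_pow, Real.log_pow, phase]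
    push_cast
    ring
  rw [hexpand, Real.exp_add, Real.exp_sub, Real.exp_log (by norm_num), Real.exp_log (by positivity)]

lemma exists_phase_rightInverse :
    ∃ ξ : ℝ → ℝ, Tendsto ξ atTop atTop ∧
      ∀ s, phase (ξ s) = s ∧ HasDerivAt ξ (phaseSpeed (ξ s))⁻¹ s := by
  have hphase_exp : ∀ y, HasDerivAt (fun y => phase (Real.exp y)) (Real.exp y ^ 2 + 2) y := by
    intro y
    simp only [phase, Real.log_exp]
    refine ((((((Real.hasDerivAt_exp y).fun_pow 2).sub_const 3).div_const 2).fun_add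
      ((hasDerivAt_id' y).const_mul 2)).sub_const (Real.log 2)).congr_deriv ?_
    push_cast
    ring
  obtain ⟨η, hη_top, hη⟩ := exists_hasDerivAt_rightInverse two_pos hphase_exp
    fun y => le_add_of_nonneg_left (by positivity)
  refine ⟨fun s => Real.exp (η s), Real.tendsto_exp_atTop.comp hη_top,
    fun s => ⟨(hη s).1, (hη s).2.exp.congr_deriv ?_⟩⟩
  rw [phaseSpeed]
  field_simp

end Profile

section Estimates

variable {x : ℝ}

lemma amplitude_sq_le (hx : 1000 ≤ x) : amplitude x ^ 2 ≤ 2 * x := by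
  rw [amplitude_sq (by linarith), phaseSpeed]
  have : 2 / x ≤ 1 := by rw [div_le_one (by linarith)]; linarith
  linarith

lemma amplitude_le (hx : 1000 ≤ x) : amplitude x ≤ x / 2 := by
  have := amplitude_sq_le hx
  exact le_of_sq_le_sq (by nlinarith) (by linarith)

lemma amplitude_pow_three_le (hx : 1000 ≤ x) : amplitude x ^ 3 ≤ x ^ 2 := by
  have hpos : 0 < amplitude x := amplitude_pos (by linarith)
  calc amplitude x ^ 3 = amplitude x ^ 2 * amplitude x := by ring
    _ ≤ 2 * x * (x / 2) := by gcongr; exacts [amplitude_sq_le hx, amplitude_le hx]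
    _ = x ^ 2 := by ring

lemma abs_phasePotential_le (hx : 1000 ≤ x) : |phasePotential x| ≤ 1 / x ^ 2 := by
  have hp : x ≤ phaseSpeed x := by unfold phaseSpeed; linarith [show 0 ≤ 2 / x by positivity]
  have hp₁ : phaseSpeed' x ^ 2 ≤ 1 := by
    have : 2 / x ^ 2 ≤ 1 := by rw [div_le_one (by positivity)]; nlinarith
    unfold phaseSpeed'
    exact pow_le_one₀ (by linarith) (by linarith [show 0 ≤ 2 / x ^ 2 by positivity])
  have hfirst : 4 / x ^ 3 / (2 * phaseSpeed x) ≤ 1 / x ^ 2 := by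
    calc 4 / x ^ 3 / (2 * phaseSpeed x) ≤ 4 / x ^ 3 / (2 * x) := by gcongr
      _ = 1 / x ^ 2 * (2 / x ^ 2) := by field_simp; norm_num
      _ ≤ 1 / x ^ 2 * 1 := by gcongr; rw [div_le_one (by positivity)]; nlinarith
      _ = 1 / x ^ 2 := mul_one _
  have hsecond : 3 * phaseSpeed' x ^ 2 / (4 * phaseSpeed x ^ 2) ≤ 1 / x ^ 2 := by
    calc 3 * phaseSpeed' x ^ 2 / (4 * phaseSpeed x ^ 2) ≤ 4 * 1 / (4 * x ^ 2) := by
          gcongr; norm_num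
      _ = 1 / x ^ 2 := by field_simp
  have hp0 : 0 < phaseSpeed x := by linarith
  unfold phasePotential halfSchwarzian
  exact abs_sub_le_of_nonneg_of_le (by positivity) hfirst (by positivity) hsecond

lemma abs_profileAccel_add_le (hx : 1000 ≤ x) : |profileAccel x + 4 / x ^ 4| ≤ 100 / x ^ 8 := by
  obtain ⟨q, hq, hqx⟩ : ∃ q, 1000 ≤ q ∧ x ^ 2 = q := ⟨x ^ 2, by nlinarith, rfl⟩
  have hq₃ : 0 < q - 3 := by linarith
  have hdiff : profileAccel x + 4 / x ^ 4 =
      -(4 * (21 * q ^ 3 + 10 * q ^ 2 - 60 * q - 72)) / (q ^ 2 * ((q + 2) ^ 3 * (q - 3) ^ 2)) := by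
    rw [profileAccel, show x ^ 4 = (x ^ 2) ^ 2 by ring, hqx]
    field_simp
    ring
  have hnum : |-(4 * (21 * q ^ 3 + 10 * q ^ 2 - 60 * q - 72))| ≤ 96 * q ^ 3 := by
    rw [abs_le]
    constructor <;> nlinarith [pow_pos (by linarith : 0 < q) 3, pow_pos (by linarith : 0 < q) 2]
  have hden : 24 / 25 * q ^ 2 ≤ (q - 3) ^ 2 := by nlinarith
  rw [hdiff, abs_div, abs_of_pos (by positivity : 0 < q ^ 2 * ((q + 2) ^ 3 * (q - 3) ^ 2))]
  calc |-(4 * (21 * q ^ 3 + 10 * q ^ 2 - 60 * q - 72))| / (q ^ 2 * ((q + 2) ^ 3 * (q - 3) ^ 2))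
      ≤ 96 * q ^ 3 / (q ^ 2 * (q ^ 3 * (24 / 25 * q ^ 2))) := by gcongr; linarith
    _ = 100 / x ^ 8 := by
      rw [show x ^ 8 = (x ^ 2) ^ 4 by ring, hqx]
      field_simp
      norm_num

end Estimates

section Remainder

variable {x y z : ℝ}

/-- The right-hand side of the equation `Z'' + 4 * Z = remainder x Z` to which the substitution
`W = log (x ^ 2 - 3) + amplitude x * Z` reduces `W'' = -exp (exp W - 2 * s)`, `s = phase x`. -/
noncomputable def remainder (x z : ℝ) : ℝ :=
  (4 - phasePotential x) * z - amplitude x ^ 3 * (profileAccel x +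
    4 / x ^ 4 * Real.exp ((x ^ 2 - 3) * (Real.exp (amplitude x * z) - 1)))

/-- Four times this is the square of the frequency of the linearized equation, up to the Liouville
potential. -/
noncomputable def stiffness (x : ℝ) : ℝ := amplitude x ^ 4 * (x ^ 2 - 3) / x ^ 4

/-- The logarithm of the factor by which the linearization of the exponential term at `z` differs
from its linearization at `0`. -/
noncomputable def logGain (x z : ℝ) : ℝ :=
  amplitude x * z + (x ^ 2 - 3) * (Real.exp (amplitude x * z) - 1)

lemma abs_remainder_zero_le (hx : 1000 ≤ x) : |remainder x 0| ≤ 100 / x ^ 6 := by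
  have hpos : 0 < amplitude x ^ 3 := pow_pos (amplitude_pos (by linarith)) 3
  have hzero : remainder x 0 = -(amplitude x ^ 3 * (profileAccel x + 4 / x ^ 4)) := by
    simp [remainder]
  rw [hzero, abs_neg, abs_mul, abs_of_pos hpos]
  calc amplitude x ^ 3 * |profileAccel x + 4 / x ^ 4| ≤ x ^ 2 * (100 / x ^ 8) := by
        gcongr; exacts [amplitude_pow_three_le hx, abs_profileAccel_add_le hx]
    _ = 100 / x ^ 6 := by field_simp

lemma hasDerivAt_remainder (x z : ℝ) : HasDerivAt (remainder x)
    (-phasePotential x + 4 * (1 - stiffness x)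
      - 4 * (stiffness x * (Real.exp (logGain x z) - 1))) z := by
  have hlin : HasDerivAt (fun z => amplitude x * z) (amplitude x) z := by
    simpa using (hasDerivAt_id' z).const_mul (amplitude x)
  refine (((hasDerivAt_id' z).const_mul (4 - phasePotential x)).fun_sub
    ((((((hlin.exp.sub_const 1).const_mul (x ^ 2 - 3)).exp).const_mul (4 / x ^ 4)).const_add
      (profileAccel x)).const_mul (amplitude x ^ 3))).congr_deriv ?_
  rw [logGain, Real.exp_add, stiffness]
  ring

lemma abs_one_sub_stiffness_le (hx : 1000 ≤ x) : |1 - stiffness x| ≤ 2 / x ^ 2 := by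
  obtain ⟨q, hq, hqx⟩ : ∃ q, 1000 ≤ q ∧ x ^ 2 = q := ⟨x ^ 2, by nlinarith, rfl⟩
  have hdiff : 1 - stiffness x = (-q ^ 2 + 8 * q + 12) / q ^ 3 := by
    rw [stiffness, show amplitude x ^ 4 = (amplitude x ^ 2) ^ 2 by ring,
      amplitude_sq (by linarith), ← hqx, phaseSpeed]
    field_simp
    ring
  have hnum : |-q ^ 2 + 8 * q + 12| ≤ 2 * q ^ 2 := by
    rw [abs_le]; constructor <;> nlinarith
  rw [hdiff, hqx, abs_div, abs_of_pos (by positivity : 0 < q ^ 3)]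
  calc |-q ^ 2 + 8 * q + 12| / q ^ 3 ≤ 2 * q ^ 2 / q ^ 3 := by gcongr
    _ = 2 / q := by field_simp

lemma abs_logGain_le (hx : 1000 ≤ x) (hz : |z| ≤ 20 / x ^ 5) : |logGain x z| ≤ 30 / x ^ 2 := by
  have hx₂ : 1000000 ≤ x ^ 2 := by nlinarith
  have hx₃ : 0 ≤ x ^ 2 - 3 := by linarith
  have hV : |amplitude x * z| ≤ 10 / x ^ 4 := by
    rw [abs_mul, abs_of_pos (amplitude_pos (by linarith))]
    calc amplitude x * |z| ≤ x / 2 * (20 / x ^ 5) := by gcongr; exact amplitude_le hx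
      _ = 10 / x ^ 4 := by field_simp; norm_num
  have hsmall : 10 / x ^ 4 ≤ 1 := by rw [div_le_one (by positivity)]; nlinarith
  have hexp := Real.abs_exp_sub_one_le (hV.trans hsmall)
  calc |logGain x z|
      ≤ |amplitude x * z| + |(x ^ 2 - 3) * (Real.exp (amplitude x * z) - 1)| := abs_add_le _ _
    _ ≤ |amplitude x * z| + (x ^ 2 - 3) * (2 * |amplitude x * z|) := by
      rw [abs_mul (x ^ 2 - 3), abs_of_nonneg hx₃]; gcongr
    _ = (2 * x ^ 2 - 5) * |amplitude x * z| := by ring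
    _ ≤ (3 * x ^ 2) * (10 / x ^ 4) := by gcongr; linarith
    _ = 30 / x ^ 2 := by field_simp; norm_num

lemma abs_deriv_remainder_le (hx : 1000 ≤ x) (hz : |z| ≤ 20 / x ^ 5) :
    |-phasePotential x + 4 * (1 - stiffness x)
      - 4 * (stiffness x * (Real.exp (logGain x z) - 1))| ≤ 500 / x ^ 2 := by
  have hx₂ : 1000000 ≤ x ^ 2 := by nlinarith
  have hgain : |Real.exp (logGain x z) - 1| ≤ 2 * (30 / x ^ 2) := by
    have hsmall : 30 / x ^ 2 ≤ 1 := by rw [div_le_one (by positivity)]; linarith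
    have hE := abs_logGain_le hx hz
    exact (Real.abs_exp_sub_one_le (hE.trans hsmall)).trans (by gcongr)
  have hstiff := abs_one_sub_stiffness_le hx
  have hstiff₂ : |stiffness x| ≤ 2 := by
    have hsmall : 2 / x ^ 2 ≤ 1 := by rw [div_le_one (by positivity)]; linarith
    rw [abs_le] at hstiff ⊢
    constructor <;> linarith
  calc |-phasePotential x + 4 * (1 - stiffness x)
        - 4 * (stiffness x * (Real.exp (logGain x z) - 1))|
      ≤ |phasePotential x| + 4 * |1 - stiffness x|
        + 4 * (|stiffness x| * |Real.exp (logGain x z) - 1|) := by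
        rw [← abs_neg (phasePotential x), ← abs_mul (stiffness x), ← abs_of_pos (four_pos (α := ℝ)),
          ← abs_mul, ← abs_mul, abs_of_pos (four_pos (α := ℝ))]
        exact (abs_sub _ _).trans (by gcongr; exact abs_add_le _ _)
    _ ≤ 1 / x ^ 2 + 4 * (2 / x ^ 2) + 4 * (2 * (2 * (30 / x ^ 2))) := by
        gcongr; exact abs_phasePotential_le hx
    _ ≤ 500 / x ^ 2 := by
        ring_nf; gcongr; norm_num

lemma abs_remainder_sub_le (hx : 1000 ≤ x) (hy : |y| ≤ 20 / x ^ 5) (hz : |z| ≤ 20 / x ^ 5) :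
    |remainder x y - remainder x z| ≤ 500 / x ^ 2 * |y - z| :=
  Convex.norm_image_sub_le_of_norm_hasDerivWithin_le
    (fun w _ => (hasDerivAt_remainder x w).hasDerivWithinAt)
    (fun _ hw => abs_deriv_remainder_le hx (abs_le.2 hw))
    (convex_Icc (-(20 / x ^ 5)) (20 / x ^ 5)) (abs_le.1 hz) (abs_le.1 hy)

lemma abs_remainder_le (hx : 1000 ≤ x) (hz : |z| ≤ 20 / x ^ 5) :
    |remainder x z| ≤ 200 / x ^ 6 := by
  have hx₀ : 0 < x := by linarith
  have hlip := abs_remainder_sub_le (z := 0) hx hz (by rw [abs_zero]; positivity)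
  calc |remainder x z| ≤ |remainder x z - remainder x 0| + |remainder x 0| := by
        simpa using abs_add_le (remainder x z - remainder x 0) (remainder x 0)
    _ ≤ 500 / x ^ 2 * (20 / x ^ 5) + 100 / x ^ 6 := by
        rw [sub_zero] at hlip
        gcongr
        exacts [hlip.trans (by gcongr), abs_remainder_zero_le hx]
    _ = 10000 / x * (1 / x ^ 6) + 100 / x ^ 6 := by field_simp; norm_num
    _ ≤ 100 * (1 / x ^ 6) + 100 / x ^ 6 := by
        gcongr; rw [div_le_iff₀ hx₀]; linarith
    _ = 200 / x ^ 6 := by ring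

lemma continuousOn_remainder : ContinuousOn (uncurry remainder) (Ici 1000 ×ˢ univ) := by
  have hx : ∀ x ∈ Ici (1000 : ℝ), 0 < x ∧ x ^ 2 - 3 ≠ 0 := fun x hx =>
    ⟨by linarith [mem_Ici.1 hx], by nlinarith [mem_Ici.1 hx]⟩
  have hspeed : ContinuousOn phaseSpeed (Ici 1000) := HasDerivAt.continuousOn fun x hx' =>
    hasDerivAt_phaseSpeed (hx x hx').1.ne'
  have hspeed' : ContinuousOn phaseSpeed' (Ici 1000) := HasDerivAt.continuousOn fun x hx' =>
    hasDerivAt_phaseSpeed' (hx x hx').1.ne'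
  have hpot : ContinuousOn phasePotential (Ici 1000) := by
    unfold phasePotential halfSchwarzian
    fun_prop (disch := intro x hx'; have := (hx x hx').1; have := phaseSpeed_pos this; positivity)
  have haccel : ContinuousOn profileAccel (Ici 1000) := by
    unfold profileAccel
    fun_prop (disch := intro x hx'; have := (hx x hx').2; positivity)
  have hfst : MapsTo Prod.fst (Ici (1000 : ℝ) ×ˢ (univ : Set ℝ)) (Ici 1000) := fun p hp => hp.1
  have hpot₂ := hpot.comp continuousOn_fst hfst
  have haccel₂ := haccel.comp continuousOn_fst hfst
  have hamp₂ := hspeed.sqrt.comp continuousOn_fst hfst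
  have hpow : ∀ p ∈ Ici (1000 : ℝ) ×ˢ (univ : Set ℝ), p.1 ^ 4 ≠ 0 := fun p hp =>
    pow_ne_zero 4 (hx p.1 hp.1).1.ne'
  simp only [comp_def] at hpot₂ haccel₂ hamp₂
  unfold uncurry remainder amplitude
  fun_prop (disch := assumption)

end Remainder

section EmdenFowler

lemma exists_remainder_solution :
    ∃ Z Z' : ℝ → ℝ, ∀ x, 1000 < x →
      HasDerivAt Z (Z' x) x ∧ HasDerivAt Z' (remainder x (Z x) - 2 ^ 2 * Z x) x ∧
        |Z x| ≤ 20 / x ^ 5 := by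
  refine exists_solution_oscillator (b := fun σ => 200 / σ ^ 6) (k := fun σ => 500 / σ ^ 2)
    two_pos continuousOn_remainder (fun x hx => by positivity) (fun x hx y _ hxy => ?_)
    (integrableOn_Ioi_div_pow 200 4 (by norm_num)) (fun x hx z => abs_remainder_le hx)
    (fun x hx => ?_) (integrableOn_Ioi_div_pow 500 0 (by norm_num)) (fun x hx => by positivity)
    (fun x hx y z => abs_remainder_sub_le hx) ?_
  · have : 0 < x := lt_of_lt_of_le (by norm_num) (mem_Ici.1 hx)
    gcongr
  · refine (congrArg (2⁻¹ * ·) (integral_Ioi_div_pow 200 4 (by linarith))).trans_le (le_of_eq ?_)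
    field_simp
    ring
  · refine (congrArg (2⁻¹ * ·) (integral_Ioi_div_pow 500 0 (by norm_num))).trans_lt ?_
    norm_num

variable {ξ Z Z' : ℝ → ℝ} {s : ℝ}

lemma hasDerivAt_correctedProfile (hξs : 1000 < ξ s) (hξ : HasDerivAt ξ (phaseSpeed (ξ s))⁻¹ s)
    (hZ : HasDerivAt Z (Z' (ξ s)) (ξ s)) :
    HasDerivAt (fun s => Real.log (ξ s ^ 2 - 3) + amplitude (ξ s) * Z (ξ s))
      (profileSlope (ξ s) + liouvilleSlope phaseSpeed phaseSpeed' Z Z' (ξ s)) s := by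
  have hx : 0 < ξ s := by linarith
  have hp := phaseSpeed_pos hx
  exact (hasDerivAt_comp_of_inv hp.ne' (hasDerivAt_log_sq_sub_three hx (by nlinarith)) hξ).fun_add
    (hasDerivAt_comp_of_inv hp.ne' (hasDerivAt_sqrt_mul hp (hasDerivAt_phaseSpeed hx.ne') hZ) hξ)

lemma hasDerivAt_correctedProfileSlope (hξs : 1000 < ξ s) (hphase : phase (ξ s) = s)
    (hξ : HasDerivAt ξ (phaseSpeed (ξ s))⁻¹ s) (hZ : HasDerivAt Z (Z' (ξ s)) (ξ s))
    (hZ' : HasDerivAt Z' (remainder (ξ s) (Z (ξ s)) - 2 ^ 2 * Z (ξ s)) (ξ s)) :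
    HasDerivAt (fun s => profileSlope (ξ s) + liouvilleSlope phaseSpeed phaseSpeed' Z Z' (ξ s))
      (-Real.exp (-2 * s) * Real.exp (Real.exp
        (Real.log (ξ s ^ 2 - 3) + amplitude (ξ s) * Z (ξ s)))) s := by
  have hx : 0 < ξ s := by linarith
  have hx₃ : 0 < ξ s ^ 2 - 3 := by nlinarith
  have hp := phaseSpeed_pos hx
  have hamp := amplitude_pos hx
  refine ((hasDerivAt_comp_of_inv hp.ne' (hasDerivAt_profileSlope hx hx₃) hξ).fun_add
    (hasDerivAt_comp_of_inv hp.ne' (hasDerivAt_liouvilleSlope hp (hasDerivAt_phaseSpeed hx.ne')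
      (hasDerivAt_phaseSpeed' hx.ne') hZ hZ') hξ)).congr_deriv ?_
  have hexp : Real.exp (-2 * s) =
      4 / ξ s ^ 4 * Real.exp (-(ξ s ^ 2 - 3)) := by
    rw [← exp_neg_two_mul_phase hx, hphase]
  rw [hexp, Real.exp_add, Real.exp_log hx₃, remainder, ← phasePotential, ← amplitude, mul_sub,
    Real.exp_sub _ (_ * 1), mul_one, Real.exp_neg]
  field_simp
  ring

theorem exists_emdenFowler_solution :
    ∃ ξ W W₁ : ℝ → ℝ, Tendsto ξ atTop atTop ∧ ∀ s, 1000 < ξ s → phase (ξ s) = s ∧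
      HasDerivAt W (W₁ s) s ∧
      HasDerivAt W₁ (-Real.exp (-2 * s) * Real.exp (Real.exp (W s))) s ∧
      |W s - Real.log (ξ s ^ 2 - 3)| ≤ 10 / ξ s ^ 4 := by
  obtain ⟨Z, Z', hZ⟩ := exists_remainder_solution
  obtain ⟨ξ, hξ_top, hξ⟩ := exists_phase_rightInverse
  refine ⟨ξ, fun s => Real.log (ξ s ^ 2 - 3) + amplitude (ξ s) * Z (ξ s),
    fun s => profileSlope (ξ s) + liouvilleSlope phaseSpeed phaseSpeed' Z Z' (ξ s), hξ_top,
    fun s hs => ?_⟩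
  obtain ⟨hphase, hξ'⟩ := hξ s
  obtain ⟨hZ', hZ'', hZ_le⟩ := hZ (ξ s) hs
  refine ⟨hphase, hasDerivAt_correctedProfile hs hξ' hZ',
    hasDerivAt_correctedProfileSlope hs hphase hξ' hZ' hZ'', ?_⟩
  rw [add_sub_cancel_left, abs_mul, abs_of_pos (amplitude_pos (by linarith))]
  calc amplitude (ξ s) * |Z (ξ s)| ≤ ξ s / 2 * (20 / ξ s ^ 5) := by
        gcongr
        exact amplitude_le hs.le
    _ = 10 / ξ s ^ 4 := by field_simp; norm_num

end EmdenFowler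

section Asymptotics

/-- `-log (w18 t)` as a function of `s = -log t`. -/
noncomputable def negLogW (s : ℝ) : ℝ := 2 * s + 2 * Real.log 2 - Real.log (2 * s + 1)

lemma neg_log_w18 {t : ℝ} (ht : t ∈ Ioo (0 : ℝ) 1) : -Real.log (w18 t) = negLogW (-Real.log t) := by
  have hlog : 0 < -2 * Real.log t + 1 := by linarith [Real.log_neg ht.1 ht.2]
  rw [w18, negLogW, Real.log_mul (by have := ht.1; positivity) hlog.ne',
    Real.log_mul (by norm_num) (pow_ne_zero 2 ht.1.ne'), Real.log_pow,
    show (1 / 4 : ℝ) = (2 ^ 2)⁻¹ by norm_num, Real.log_inv, Real.log_pow]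
  push_cast
  ring_nf

variable {x : ℝ}

lemma two_mul_phase (x : ℝ) :
    2 * phase x = x ^ 2 - 3 + 2 * Real.log (x ^ 2) - 2 * Real.log 2 := by
  rw [phase, Real.log_pow]
  push_cast
  ring

lemma four_le_log_sq (hx : 1000 ≤ x) : 4 ≤ Real.log (x ^ 2) := by
  rw [Real.le_log_iff_exp_le (by positivity)]
  calc Real.exp 4 = Real.exp 1 ^ 4 := by rw [← Real.exp_nat_mul]; norm_num
    _ ≤ 3 ^ 4 := by gcongr; exact Real.exp_one_lt_three.le
    _ ≤ x ^ 2 := by nlinarith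

lemma log_sq_div_sq_le (hx : 1000 ≤ x) : Real.log (x ^ 2) / x ^ 2 ≤ 1 / 8 := by
  have hx₀ : 0 < x := by linarith
  have hlog : Real.log (x ^ 2) ≤ 2 * x := by
    rw [Real.log_pow]
    push_cast
    linarith [Real.log_le_self hx₀.le]
  calc Real.log (x ^ 2) / x ^ 2 ≤ 2 * x / x ^ 2 := by gcongr
    _ = 2 / x := by field_simp
    _ ≤ 1 / 8 := by rw [div_le_div_iff₀ hx₀ (by norm_num)]; linarith

lemma abs_log_sub_log_sq_le (hx : 1000 ≤ x) {y : ℝ} (hy : |y - x ^ 2| ≤ 2 * Real.log (x ^ 2)) :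
    |Real.log y - Real.log (x ^ 2)| ≤ 4 * (Real.log (x ^ 2) / x ^ 2) := by
  have hx₂ : 0 < x ^ 2 := by positivity
  have hlog : Real.log (x ^ 2) ≤ 1 / 8 * x ^ 2 := (div_le_iff₀ hx₂).1 (log_sq_div_sq_le hx)
  calc |Real.log y - Real.log (x ^ 2)| ≤ |y - x ^ 2| / (x ^ 2 / 2) :=
        abs_log_sub_log_le (by positivity) (by linarith [(abs_le.1 hy).1]) (by linarith)
    _ ≤ 2 * Real.log (x ^ 2) / (x ^ 2 / 2) := by gcongr
    _ = 4 * (Real.log (x ^ 2) / x ^ 2) := by field_simp; ring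

lemma abs_negLogW_phase_sub_le (hx : 1000 ≤ x) :
    |negLogW (phase x) - (x ^ 2 - 3 + Real.log (x ^ 2))| ≤ 4 * (Real.log (x ^ 2) / x ^ 2) := by
  have hlog := four_le_log_sq hx
  have hlog2 := Real.log_two_gt_d9
  have hlog2' := Real.log_two_lt_d9
  have hphase := two_mul_phase x
  have hclose := abs_log_sub_log_sq_le (y := 2 * phase x + 1) hx
    (abs_le.2 ⟨by linarith, by linarith⟩)
  rw [negLogW, abs_sub_comm]
  convert hclose using 2
  linarith

lemma abs_log_negLogW_phase_sub_le (hx : 1000 ≤ x) :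
    |Real.log (negLogW (phase x)) - Real.log (x ^ 2)| ≤ 4 * (Real.log (x ^ 2) / x ^ 2) := by
  have hlog := four_le_log_sq hx
  have hratio := log_sq_div_sq_le hx
  obtain ⟨hlow, hupp⟩ := abs_le.1 (abs_negLogW_phase_sub_le hx)
  exact abs_log_sub_log_sq_le hx (abs_le.2 ⟨by linarith, by linarith⟩)

lemma abs_log_sub_three_sub_log_le (hx : 1000 ≤ x) :
    |Real.log (x ^ 2 - 3) - Real.log (negLogW (phase x) - Real.log (negLogW (phase x)))| ≤
      16 * Real.log (x ^ 2) / x ^ 4 := by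
  have hx₂ : 1000000 ≤ x ^ 2 := by nlinarith
  have hratio := log_sq_div_sq_le hx
  have hinner : |x ^ 2 - 3 - (negLogW (phase x) - Real.log (negLogW (phase x)))| ≤
      8 * (Real.log (x ^ 2) / x ^ 2) := by
    obtain ⟨hlow, hupp⟩ := abs_le.1 (abs_negLogW_phase_sub_le hx)
    obtain ⟨hlow', hupp'⟩ := abs_le.1 (abs_log_negLogW_phase_sub_le hx)
    exact abs_le.2 ⟨by linarith, by linarith⟩
  calc _ ≤ |x ^ 2 - 3 - (negLogW (phase x) - Real.log (negLogW (phase x)))| / (x ^ 2 / 2) :=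
        abs_log_sub_log_le (by positivity) (by linarith) (by linarith [(abs_le.1 hinner).2])
    _ ≤ 8 * (Real.log (x ^ 2) / x ^ 2) / (x ^ 2 / 2) := by gcongr
    _ = 16 * Real.log (x ^ 2) / x ^ 4 := by field_simp; ring

lemma log_sq_div_pow_four_le (hx : 1000 ≤ x) :
    Real.log (x ^ 2) / x ^ 4 ≤ 8 * Real.log (negLogW (phase x)) / negLogW (phase x) ^ 2 := by
  have hx₂ : 1000000 ≤ x ^ 2 := by nlinarith
  have hlog := four_le_log_sq hx
  have hratio := log_sq_div_sq_le hx
  have hlog' : Real.log (x ^ 2) ≤ 1 / 8 * x ^ 2 := (div_le_iff₀ (by positivity)).1 hratio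
  obtain ⟨hlow, hupp⟩ := abs_le.1 (abs_negLogW_phase_sub_le hx)
  obtain ⟨hlow', -⟩ := abs_le.1 (abs_log_negLogW_phase_sub_le hx)
  have hpos : 0 < negLogW (phase x) := by linarith
  calc Real.log (x ^ 2) / x ^ 4 = 8 * (Real.log (x ^ 2) / 2) / (2 * x ^ 2) ^ 2 := by
        field_simp; norm_num
    _ ≤ 8 * Real.log (negLogW (phase x)) / negLogW (phase x) ^ 2 := by
        gcongr 8 * ?_ / ?_ ^ 2 <;> linarith

theorem abs_sub_log_le_of_abs_sub_profile_le (hx : 1000 ≤ x) {v : ℝ}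
    (hv : |v - Real.log (x ^ 2 - 3)| ≤ 10 / x ^ 4) :
    |v - Real.log (negLogW (phase x) - Real.log (negLogW (phase x)))| ≤
      200 * Real.log (negLogW (phase x)) / negLogW (phase x) ^ 2 := by
  have hlog := four_le_log_sq hx
  calc |v - Real.log (negLogW (phase x) - Real.log (negLogW (phase x)))|
      ≤ 10 / x ^ 4 + 16 * Real.log (x ^ 2) / x ^ 4 :=
        (abs_sub_le _ _ _).trans (add_le_add hv (abs_log_sub_three_sub_log_le hx))
    _ = (10 + 16 * Real.log (x ^ 2)) / x ^ 4 := by ring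
    _ ≤ 25 * Real.log (x ^ 2) / x ^ 4 := by gcongr; linarith
    _ = 25 * (Real.log (x ^ 2) / x ^ 4) := mul_div_assoc _ _ _
    _ ≤ 25 * (8 * Real.log (negLogW (phase x)) / negLogW (phase x) ^ 2) :=
        mul_le_mul_of_nonneg_left (log_sq_div_pow_four_le hx) (by norm_num)
    _ = 200 * Real.log (negLogW (phase x)) / negLogW (phase x) ^ 2 := by ring

theorem exists_emdenFowler_solution_asymptotics :
    ∃ s₀ : ℝ, 0 < s₀ ∧ ∃ W W₁ : ℝ → ℝ, Tendsto W atTop atTop ∧ ∀ s, s₀ < s →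
      HasDerivAt W (W₁ s) s ∧
      HasDerivAt W₁ (-Real.exp (-2 * s) * Real.exp (Real.exp (W s))) s ∧
      |W s - Real.log (negLogW s - Real.log (negLogW s))| ≤
        200 * Real.log (negLogW s) / negLogW s ^ 2 := by
  obtain ⟨ξ, W, W₁, hξ, hW⟩ := exists_emdenFowler_solution
  obtain ⟨s₀, hs₀⟩ := eventually_atTop.1 (hξ.eventually_gt_atTop 1000)
  refine ⟨max s₀ 1, by positivity, W, W₁, ?_, fun s hs => ?_⟩
  · have hlog : Tendsto (fun s => Real.log (ξ s ^ 2 - 3) - 1) atTop atTop :=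
      tendsto_atTop_add_const_right _ _ (Real.tendsto_log_atTop.comp
        (tendsto_atTop_add_const_right _ _ ((tendsto_pow_atTop two_ne_zero).comp hξ)))
    refine tendsto_atTop_mono' _ ?_ hlog
    filter_upwards [hξ.eventually_gt_atTop 1000] with s hs
    have hsmall : 10 / ξ s ^ 4 ≤ 1 := by
      rw [div_le_one (by positivity)]
      nlinarith [pow_le_pow_left₀ (by norm_num) hs.le 4]
    linarith [(abs_le.1 (hW s hs).2.2.2).1]
  · have hξs := hs₀ s ((le_max_left _ _).trans hs.le)
    obtain ⟨hphase, hW', hW₁', hclose⟩ := hW s hξs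
    have hasymp := abs_sub_log_le_of_abs_sub_profile_le hξs.le hclose
    rw [hphase] at hasymp
    exact ⟨hW', hW₁', hasymp⟩

end Asymptotics

end Analysis

/-- Example 3.4 (the case `q = 1`): the radial equation
`u'' + u'/t + e^{e^u} = 0` has a singular solution near the origin with
`u(t) = log(−log w(t) − log(−log w(t))) + O(log(−log w)/(−log w)²)`. -/
theorem stmt18 :
    ∃ r₀ ∈ Set.Ioo (0 : ℝ) 1, ∃ C > (0 : ℝ), ∃ u : ℝ → ℝ,
      ContDiffOn ℝ 2 u (Set.Ioo 0 r₀) ∧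
      (∀ t ∈ Set.Ioo (0 : ℝ) r₀,
        deriv (deriv u) t + deriv u t / t + Real.exp (Real.exp (u t)) = 0) ∧
      Tendsto u (nhdsWithin 0 (Set.Ioi 0)) atTop ∧
      ∀ t ∈ Set.Ioo (0 : ℝ) r₀,
        |u t - Real.log (-Real.log (w18 t) - Real.log (-Real.log (w18 t)))|
          ≤ C * Real.log (-Real.log (w18 t)) / (-Real.log (w18 t)) ^ 2 := by
  obtain ⟨s₀, hs₀, W, W₁, hW_top, hW⟩ := exists_emdenFowler_solution_asymptotics
  obtain ⟨hC2, hode⟩ := radial_solution_of_emdenFowler (Real.continuous_exp.comp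
    Real.continuous_exp) (fun s hs => (hW s hs).1) (fun s hs => (hW s hs).2.1)
  have hr₀ : Real.exp (-s₀) < 1 := Real.exp_lt_one_iff.2 (neg_neg_of_pos hs₀)
  refine ⟨Real.exp (-s₀), ⟨Real.exp_pos _, hr₀⟩, 200, by norm_num, fun t => W (-Real.log t),
    hC2, hode, hW_top.comp (tendsto_neg_atBot_atTop.comp Real.tendsto_log_nhdsGT_zero),
    fun t ht => ?_⟩
  rw [neg_log_w18 ⟨ht.1, ht.2.trans hr₀⟩]
  exact (hW _ (lt_neg_log_of_mem_Ioo ht)).2.2
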